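/- Let (P_t)_{t≥0} be an increasing family of orthogonal projections on H, let f : [0,∞) → B(H) be adapted-commuting with respect to (P_t), let ξ ∈ H, and let ε, δ > 0 be such that ‖f(u) − f(v)‖ ≤ ε/(2‖ξ‖) whenever u, v ∈ [a,b] and |u − v| ≤ δ. If θ' is a partition of [a,b] with mesh less than δ and θ'' is any refinement of θ', then ‖σ_{θ''} ξ − σ_{θ'} ξ‖ ≤ ε/2. -/

import Mathlib

/-- `sigmaSum f P θ` is the operator sum σ_θ = Σ_{k=1}^m f(t_{k−1})(P_{t_k} − P_{t_{k−1}})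
where t₀ < t₁ < ⋯ < tₘ is the increasing enumeration of the finite set θ. -/
noncomputable def sigmaSum {H : Type*} [NormedAddCommGroup H] [InnerProductSpace ℂ H]
    (f P : ℝ → H →L[ℂ] H) (θ : Finset ℝ) : H →L[ℂ] H :=
  (((θ.sort (· ≤ ·)).zip (θ.sort (· ≤ ·)).tail).map
    (fun p => f p.1 ∘L (P p.2 - P p.1))).sum

/-- `IsPartitionOf a b θ`: θ is a partition a = t₀ < t₁ < ⋯ < tₘ = b of [a,b]. -/
def IsPartitionOf (a b : ℝ) (θ : Finset ℝ) : Prop :=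
  a ∈ θ ∧ b ∈ θ ∧ ∀ x ∈ θ, x ∈ Set.Icc a b

/-- `meshOf θ` is the mesh max_{1≤k≤m}(t_k − t_{k−1}) of the partition θ. -/
noncomputable def meshOf (θ : Finset ℝ) : ℝ :=
  (((θ.sort (· ≤ ·)).zip (θ.sort (· ≤ ·)).tail).map (fun p => p.2 - p.1)).foldr max 0

/-- Step sum with current coefficient point `c` and current position `x`. -/
noncomputable def stepSum {H : Type*} [NormedAddCommGroup H] [InnerProductSpace ℂ H]
    (f P : ℝ → H →L[ℂ] H) (ξ : H) : ℝ → ℝ → List ℝ → H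
  | _, _, [] => 0
  | c, x, z :: L => f c (P z ξ - P x ξ) + stepSum f P ξ z z L

theorem stepSum_eq {H : Type*} [NormedAddCommGroup H] [InnerProductSpace ℂ H]
    (f P : ℝ → H →L[ℂ] H) (ξ : H) (L : List ℝ) : ∀ x : ℝ,
    ((((x :: L).zip (x :: L).tail).map (fun p => f p.1 ∘L (P p.2 - P p.1))).sum) ξ
      = stepSum f P ξ x x L := by
  induction L with
  | nil => intro x; simp [stepSum]
  | cons y L ih =>
    intro x
    have h := ih y
    simp only [List.tail_cons] at h
    simp only [List.tail_cons, List.zip_cons_cons, List.map_cons, List.sum_cons, stepSum,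
      ContinuousLinearMap.add_apply]
    rw [h]
    simp

theorem mesh_chain (δ : ℝ) (L : List ℝ) : ∀ x : ℝ,
    ((((x :: L).zip (x :: L).tail).map (fun p => p.2 - p.1)).foldr max 0) < δ →
    (x :: L).IsChain (fun u v => v - u ≤ δ) := by
  induction L with
  | nil => intro x _; simp
  | cons y L ih =>
    intro x h
    simp only [List.tail_cons, List.zip_cons_cons, List.map_cons, List.foldr_cons,
      max_lt_iff] at h
    exact List.isChain_cons_cons.2 ⟨h.1.le, ih y h.2⟩

theorem pyth {H : Type*} [NormedAddCommGroup H] [InnerProductSpace ℂ H] [CompleteSpace H]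
    (Q : H →L[ℂ] H) (hQ : IsSelfAdjoint Q) (u w : H) (hu : Q u = u) (hw : Q w = 0) :
    ‖u + w‖ ^ 2 = ‖u‖ ^ 2 + ‖w‖ ^ 2 := by
  have h : inner ℂ u w = 0 := by
    have h1 : inner ℂ (Q u) w = inner ℂ u (Q w) := hQ.isSymmetric u w
    rw [hu, hw, inner_zero_right] at h1
    exact h1
  rw [@norm_add_sq ℂ, h]
  simp

theorem core
    {H : Type*} [NormedAddCommGroup H] [InnerProductSpace ℂ H] [CompleteSpace H]
    (a b : ℝ) (ha : 0 ≤ a)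
    (P : ℝ → H →L[ℂ] H)
    (hP_proj : ∀ s, 0 ≤ s → IsSelfAdjoint (P s) ∧ P s ∘L P s = P s)
    (hP_mono : ∀ s u, 0 ≤ s → s ≤ u → P s ∘L P u = P s ∧ P u ∘L P s = P s)
    (f : ℝ → H →L[ℂ] H)
    (hf_adapted : ∀ s u, 0 ≤ s → s ≤ u → f s ∘L P u = P u ∘L f s)
    (ξ : H) (C δ : ℝ) (hC : 0 ≤ C)
    (hf_osc : ∀ u v, u ∈ Set.Icc a b → v ∈ Set.Icc a b → |u - v| ≤ δ →
      ‖f u - f v‖ ≤ C) (M : List ℝ) : ∀ (c x : ℝ) (L : List ℝ),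
    (x :: M).Pairwise (· < ·) → (∀ z ∈ x :: M, z ∈ Set.Icc a b) → c ∈ Set.Icc a b → c ≤ x →
    L.Sublist M → (c :: L).IsChain (fun u v => v - u ≤ δ) → b ∈ c :: L →
    P x (stepSum f P ξ x x M - stepSum f P ξ c x L) = 0 ∧
    ‖stepSum f P ξ x x M - stepSum f P ξ c x L‖ ^ 2 ≤ C ^ 2 * ‖ξ - P x ξ‖ ^ 2 := by
  have pm1 : ∀ s u v, 0 ≤ s → s ≤ u → P s (P u v) = P s v := fun s u v h h' =>
    congrArg (fun T : H →L[ℂ] H => T v) (hP_mono s u h h').1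
  have pm2 : ∀ s u v, 0 ≤ s → s ≤ u → P u (P s v) = P s v := fun s u v h h' =>
    congrArg (fun T : H →L[ℂ] H => T v) (hP_mono s u h h').2
  have fa : ∀ s u v, 0 ≤ s → s ≤ u → P u (f s v) = f s (P u v) := fun s u v h h' =>
    (congrArg (fun T : H →L[ℂ] H => T v) (hf_adapted s u h h')).symm
  induction M with
  | nil =>
    intro c x L _ _ _ _ hs _ _
    obtain rfl := List.sublist_nil.1 hs
    simp only [stepSum, sub_self, map_zero, norm_zero, true_and]
    rw [zero_pow two_ne_zero]
    positivity
  | cons y M ih =>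
    intro c x L hpw hIcc hc hcx hs hch hb
    have hpw' := List.pairwise_cons.1 hpw
    have hxy : x < y := hpw'.1 y (by simp)
    have hx := hIcc x (by simp)
    have hy := hIcc y (by simp)
    have hx0 : 0 ≤ x := ha.trans hx.1
    have hy0 : 0 ≤ y := ha.trans hy.1
    have hc0 : 0 ≤ c := ha.trans hc.1
    have hIcc' : ∀ z ∈ y :: M, z ∈ Set.Icc a b := fun z hz => hIcc z (by simp [hz])
    -- the common final step
    have step : ∀ D : H, P y D = 0 → ‖D‖ ^ 2 ≤ C ^ 2 * ‖ξ - P y ξ‖ ^ 2 → ‖f x - f c‖ ≤ C →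
        P x ((f x - f c) (P y ξ - P x ξ) + D) = 0 ∧
        ‖(f x - f c) (P y ξ - P x ξ) + D‖ ^ 2 ≤ C ^ 2 * ‖ξ - P x ξ‖ ^ 2 := by
      intro D hD hDn hf
      constructor
      · have : P x D = 0 := by rw [← pm1 x y D hx0 hxy.le, hD, map_zero]
        rw [map_add, this, ContinuousLinearMap.sub_apply, map_sub, fa x x _ hx0 le_rfl,
          fa c x _ hc0 hcx, map_sub, pm1 x y _ hx0 hxy.le, pm1 x x _ hx0 le_rfl]
        simp
      · have h1 := pyth (P y) (hP_proj y hy0).1 ((f x - f c) (P y ξ - P x ξ)) D (by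
          rw [ContinuousLinearMap.sub_apply, map_sub, fa x y _ hx0 hxy.le,
            fa c y _ hc0 (hcx.trans hxy.le), map_sub, pm1 y y _ hy0 le_rfl,
            pm2 x y _ hx0 hxy.le]) hD
        have h2 := pyth (P y) (hP_proj y hy0).1 (P y ξ - P x ξ) (ξ - P y ξ) (by
          rw [map_sub, pm1 y y _ hy0 le_rfl, pm2 x y _ hx0 hxy.le]) (by
          rw [map_sub, pm1 y y _ hy0 le_rfl, sub_self])
        have h3 : P y ξ - P x ξ + (ξ - P y ξ) = ξ - P x ξ := by abel
        rw [h3] at h2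
        have h4 : ‖(f x - f c) (P y ξ - P x ξ)‖ ≤ C * ‖P y ξ - P x ξ‖ :=
          (f x - f c).le_of_opNorm_le hf _
        have h5 := pow_le_pow_left₀ (norm_nonneg _) h4 2
        rw [h1, h2]
        rw [mul_pow] at h5
        linarith
    cases L with
    | nil =>
      simp only [List.mem_singleton] at hb
      have := hy.2
      linarith
    | cons z L =>
      have hzmem : z ∈ y :: M := hs.subset (by simp)
      have hxz : x < z := hpw'.1 z hzmem
      have hch' := List.isChain_cons_cons.1 hch
      have hf : ‖f x - f c‖ ≤ C := by
        apply hf_osc x c hx hc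
        rw [abs_of_nonneg (by linarith)]
        linarith [hch'.1]
      have hbz : b ∈ z :: L := by
        rcases List.mem_cons.1 hb with h | h
        · have := (hIcc' z hzmem).2
          linarith
        · exact h
      cases hs with
      | cons _ hs =>
        obtain ⟨i1, i2⟩ := ih c y (z :: L) hpw'.2 hIcc' hc (hcx.trans hxy.le) hs hch hb
        have := step _ i1 i2 hf
        have e : (f x - f c) (P y ξ - P x ξ) +
            (stepSum f P ξ y y M - stepSum f P ξ c y (z :: L)) =
            stepSum f P ξ x x (y :: M) - stepSum f P ξ c x (z :: L) := by
          simp only [stepSum, ContinuousLinearMap.sub_apply, map_sub]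
          abel
        rwa [e] at this
      | cons_cons _ hs =>
        obtain ⟨i1, i2⟩ := ih y y L hpw'.2 hIcc' hy le_rfl hs hch'.2 hbz
        have := step _ i1 i2 hf
        have e : (f x - f c) (P y ξ - P x ξ) +
            (stepSum f P ξ y y M - stepSum f P ξ y y L) =
            stepSum f P ξ x x (y :: M) - stepSum f P ξ c x (y :: L) := by
          simp only [stepSum, ContinuousLinearMap.sub_apply, map_sub]
          abel
        rwa [e] at this

theorem sort_head (a b : ℝ) (θ : Finset ℝ) (h : IsPartitionOf a b θ) :
    ∃ L, θ.sort (· ≤ ·) = a :: L := by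
  have hm : a ∈ θ.sort (· ≤ ·) := (Finset.mem_sort _).2 h.1
  have hp := θ.pairwise_sort (· ≤ ·)
  have hi : ∀ z ∈ θ.sort (· ≤ ·), a ≤ z := fun z hz => (h.2.2 z ((Finset.mem_sort _).1 hz)).1
  cases hs : θ.sort (· ≤ ·) with
  | nil => simp [hs] at hm
  | cons x L =>
    rw [hs] at hm hp hi
    refine ⟨L, ?_⟩
    have h1 := hi x (by simp)
    rcases List.mem_cons.1 hm with h2 | h2
    · rw [h2]
    · rw [le_antisymm h1 ((List.pairwise_cons.1 hp).1 a h2)]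

/-- If ‖f(u) − f(v)‖ ≤ ε/(2‖ξ‖) whenever u, v ∈ [a,b] with |u − v| ≤ δ, θ'
is a partition of [a,b] of mesh < δ and θ'' refines θ', then
‖σ_{θ''}ξ − σ_{θ'}ξ‖ ≤ ε/2. -/
theorem sigma_refinement_estimate
    {H : Type*} [NormedAddCommGroup H] [InnerProductSpace ℂ H] [CompleteSpace H]
    (a b : ℝ) (ha : 0 ≤ a) (hab : a < b)
    (P : ℝ → H →L[ℂ] H)
    (hP_proj : ∀ s, 0 ≤ s → IsSelfAdjoint (P s) ∧ P s ∘L P s = P s)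
    (hP_mono : ∀ s u, 0 ≤ s → s ≤ u → P s ∘L P u = P s ∧ P u ∘L P s = P s)
    (f : ℝ → H →L[ℂ] H)
    (hf_adapted : ∀ s u, 0 ≤ s → s ≤ u → f s ∘L P u = P u ∘L f s)
    (ξ : H) (ε δ : ℝ) (hε : 0 < ε) (hδ : 0 < δ)
    (hf_osc : ∀ u v, u ∈ Set.Icc a b → v ∈ Set.Icc a b → |u - v| ≤ δ →
      ‖f u - f v‖ ≤ ε / (2 * ‖ξ‖))
    (θ' θ'' : Finset ℝ)
    (hθ' : IsPartitionOf a b θ') (hθ'' : IsPartitionOf a b θ'')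
    (hmesh : meshOf θ' < δ) (hsub : θ' ⊆ θ'') :
    ‖sigmaSum f P θ'' ξ - sigmaSum f P θ' ξ‖ ≤ ε / 2 := by
  by_cases hξ : ξ = 0
  · subst hξ
    simp only [map_zero, sub_self, norm_zero]
    positivity
  have hn : 0 < ‖ξ‖ := norm_pos_iff.2 hξ
  obtain ⟨L, hL⟩ := sort_head a b θ' hθ'
  obtain ⟨M, hM⟩ := sort_head a b θ'' hθ''
  have hsubl : (θ'.sort (· ≤ ·)).Sublist (θ''.sort (· ≤ ·)) := by
    apply List.sublist_of_subperm_of_pairwise (r := (· ≤ ·)) _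
      (θ'.pairwise_sort (· ≤ ·)) (θ''.pairwise_sort (· ≤ ·))
    apply (θ'.sort_nodup (· ≤ ·)).subperm
    intro z hz
    exact (Finset.mem_sort _).2 (hsub ((Finset.mem_sort _).1 hz))
  rw [hL, hM, List.cons_sublist_cons] at hsubl
  have hC : 0 ≤ ε / (2 * ‖ξ‖) := by positivity
  have hpw : (a :: M).Pairwise (· < ·) := by
    rw [← hM]
    exact θ''.sortedLT_sort.pairwise
  have hch : (a :: L).IsChain (fun u v => v - u ≤ δ) := by
    apply mesh_chain
    rw [← hL]
    exact hmesh
  have key := (core a b ha P hP_proj hP_mono f hf_adapted ξ _ δ hC hf_osc M a a L hpw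
    (fun z hz => hθ''.2.2 z ((Finset.mem_sort (· ≤ ·)).1 (hM ▸ hz)))
    ⟨le_rfl, hab.le⟩ le_rfl hsubl hch (hL ▸ (Finset.mem_sort (· ≤ ·)).2 hθ'.2.1)).2
  unfold sigmaSum
  rw [hL, hM, stepSum_eq, stepSum_eq]
  have hPa : P a (P a ξ) = P a ξ :=
    congrArg (fun T : H →L[ℂ] H => T ξ) (hP_proj a ha).2
  have h2 := pyth (P a) (hP_proj a ha).1 (P a ξ) (ξ - P a ξ) hPa (by
    rw [map_sub, hPa, sub_self])
  rw [add_sub_cancel] at h2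
  have h3 : ‖ξ - P a ξ‖ ^ 2 ≤ ‖ξ‖ ^ 2 := by nlinarith [sq_nonneg ‖P a ξ‖]
  have h4 : (ε / (2 * ‖ξ‖)) ^ 2 * ‖ξ‖ ^ 2 = (ε / 2) ^ 2 := by
    field_simp
  refine (sq_le_sq₀ (norm_nonneg _) (by positivity)).1 ?_
  calc _ ≤ _ := key
    _ ≤ (ε / (2 * ‖ξ‖)) ^ 2 * ‖ξ‖ ^ 2 := by gcongr
    _ = _ := h4
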